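/- Every ℚ-very meagre subset of ℝ is meagre in ℝ (with its usual topology). -/

import Mathlib

/-- `X ⊆ ℝ` is `ℚ`-nowhere dense: for every rational `q` there is a nonzero integer `k`
such that the open interval with endpoints `q` and `q + 1/k` is disjoint from `X`. -/
def QNowhereDense (X : Set ℝ) : Prop :=
  ∀ q : ℚ, ∃ k : ℤ, k ≠ 0 ∧
    ∀ x ∈ X, x ∉ Set.Ioo (min (q : ℝ) ((q : ℝ) + 1 / (k : ℝ))) (max (q : ℝ) ((q : ℝ) + 1 / (k : ℝ)))

/-- `X ⊆ ℝ` is `ℚ`-very meagre: a countable union of `ℚ`-nowhere dense sets. -/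
def QVeryMeagre (X : Set ℝ) : Prop :=
  ∃ g : ℕ → Set ℝ, (∀ n, QNowhereDense (g n)) ∧ X = ⋃ n, g n

section OpenDisjoint

variable {α : Type*} [TopologicalSpace α] {s D : Set α}

theorem isNowhereDense_of_forall_mem_closure_open_disjoint (hD : Dense D)
    (h : ∀ q ∈ D, ∃ U, IsOpen U ∧ Disjoint s U ∧ q ∈ closure U) : IsNowhereDense s := by
  have hD_sub : D ⊆ closure (closure s)ᶜ := by
    intro q hq
    obtain ⟨U, hU, hsU, hqU⟩ := h q hq
    have hU_compl : U ⊆ (closure s)ᶜ := (hsU.closure_left hU).subset_compl_left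
    exact closure_mono hU_compl hqU
  exact interior_eq_empty_iff_dense_compl.2 (dense_closure.1 (hD.mono hD_sub))

theorem isNowhereDense_of_forall_disjoint_uIoo [LinearOrder α] [OrderTopology α]
    [DenselyOrdered α] (hD : Dense D) (h : ∀ q ∈ D, ∃ b, q ≠ b ∧ Disjoint s (Set.uIoo q b)) :
    IsNowhereDense s := by
  refine isNowhereDense_of_forall_mem_closure_open_disjoint hD fun q hq => ?_
  obtain ⟨b, hqb, hsb⟩ := h q hq
  have hq_closure : q ∈ closure (Set.uIoo q b) := by
    rw [closure_uIoo hqb]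
    exact Set.left_mem_uIcc
  exact ⟨Set.uIoo q b, isOpen_Ioo, hsb, hq_closure⟩

end OpenDisjoint

theorem QNowhereDense.isNowhereDense {X : Set ℝ} (hX : QNowhereDense X) : IsNowhereDense X := by
  refine isNowhereDense_of_forall_disjoint_uIoo Rat.denseRange_cast (Set.forall_mem_range.2 ?_)
  intro q
  obtain ⟨k, hk, hdisj⟩ := hX q
  have hne : (q : ℝ) ≠ q + 1 / k :=
    (add_ne_left.2 (one_div_ne_zero (Int.cast_ne_zero.2 hk))).symm
  exact ⟨q + 1 / k, hne, Set.disjoint_left.2 hdisj⟩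

theorem stmt3 (X : Set ℝ) (hX : QVeryMeagre X) : IsMeagre X := by
  obtain ⟨g, hg, rfl⟩ := hX
  exact isMeagre_iUnion fun n => (hg n).isNowhereDense.isMeagre
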